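/- arXiv:1701.01085 — 3 statements merged into one kernel-verified Lean document; each statement's English description precedes it below -/
import Mathlib

section
/- Let (E, 𝓔, m) be a σ-finite measure space and let p : (0,∞) × E × E → [0,∞] be measurable, symmetric in the sense that p(t,x,y) = p(t,y,x) for all t > 0 and x, y ∈ E, and satisfy the Chapman–Kolmogorov identity ∫_E p(t,y,x)·p(s,x,y) m(dx) = p(t+s,y,y) for all s, t > 0 and y ∈ E. Fix α > 0 and y ∈ E, and define u^α(x,y) := ∫₀^∞ e^{−αt} p(t,x,y) dt. Then ∫_E (u^α(x,y))² m(dx) = ∫₀^∞ t·e^{−αt}·p(t,y,y) dt. -/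
open MeasureTheory Set
open scoped ENNReal

/-! Expanding the product of two potentials as a double time integral and integrating over the
state space first, Chapman–Kolmogorov collapses `e^{-αs} p(s,x,z) · e^{-αt} p(t,z,y)` to
`e^{-α(s+t)} p(s+t,x,y)`. The result depends on `s + t` only, and the set of pairs `(s, t)` of
positive times with `s + t = r` is parametrized by `s ∈ (0, r)`; its length `r` becomes the
weight of the final integral. -/

theorem setLIntegral_Ioi_comp_add_left (g : ℝ → ℝ≥0∞) (s a : ℝ) :
    ∫⁻ t in Ioi a, g (s + t) = ∫⁻ t in Ioi (s + a), g t := by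
  rw [← image_const_add_Ioi]
  exact (measurePreserving_add_left volume s).setLIntegral_comp_emb
    (measurableEmbedding_addLeft s) g (Ioi a)

-- The layer-cake formula for the function `t ↦ t` and the measure with density `g` on `(0, ∞)`.
theorem lintegral_Ioi_lintegral_Ioi_comp_add {g : ℝ → ℝ≥0∞} (hg : Measurable g) :
    ∫⁻ s in Ioi (0 : ℝ), ∫⁻ t in Ioi (0 : ℝ), g (s + t)
      = ∫⁻ t in Ioi (0 : ℝ), ENNReal.ofReal t * g t := by
  let ν : Measure ℝ := (volume.restrict (Ioi 0)).withDensity g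
  have tail_eq : ∀ s ∈ Ioi (0 : ℝ), ∫⁻ t in Ioi (0 : ℝ), g (s + t) = ν (Ioi s) := by
    intro s hs
    have inter_eq : Ioi s ∩ Ioi 0 = Ioi s := inter_eq_left.2 (Ioi_subset_Ioi (le_of_lt hs))
    rw [setLIntegral_Ioi_comp_add_left, add_zero, withDensity_apply _ measurableSet_Ioi,
      Measure.restrict_restrict measurableSet_Ioi, inter_eq]
  have id_nonneg : 0 ≤ᵐ[ν] (id : ℝ → ℝ) :=
    (withDensity_absolutelyContinuous _ _).ae_le
      ((ae_restrict_mem measurableSet_Ioi).mono fun _ ht => le_of_lt ht)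
  calc ∫⁻ s in Ioi (0 : ℝ), ∫⁻ t in Ioi (0 : ℝ), g (s + t)
      = ∫⁻ s in Ioi (0 : ℝ), ν (Ioi s) := setLIntegral_congr_fun measurableSet_Ioi tail_eq
    _ = ∫⁻ t, ENNReal.ofReal t ∂ν :=
        (lintegral_eq_lintegral_meas_lt ν id_nonneg aemeasurable_id).symm
    _ = ∫⁻ t in Ioi (0 : ℝ), g t * ENNReal.ofReal t :=
        lintegral_withDensity_eq_lintegral_mul _ hg ENNReal.measurable_ofReal
    _ = ∫⁻ t in Ioi (0 : ℝ), ENNReal.ofReal t * g t := by simp only [mul_comm]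

theorem lintegral_lintegral_mul_lintegral {E S T : Type*} [MeasurableSpace E] [MeasurableSpace S]
    [MeasurableSpace T] {m : Measure E} {μ : Measure S} {ν : Measure T} [SFinite m] [SFinite μ]
    [SFinite ν] {f : S → E → ℝ≥0∞} {g : T → E → ℝ≥0∞}
    (hf : Measurable fun q : S × E => f q.1 q.2) (hg : Measurable fun q : T × E => g q.1 q.2) :
    ∫⁻ z, (∫⁻ s, f s z ∂μ) * ∫⁻ t, g t z ∂ν ∂m
      = ∫⁻ s, ∫⁻ t, ∫⁻ z, f s z * g t z ∂m ∂ν ∂μ := by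
  have integrand_measurable :
      Measurable fun q : E × S × T => f q.2.1 q.1 * g q.2.2 q.1 := by
    fun_prop
  calc ∫⁻ z, (∫⁻ s, f s z ∂μ) * ∫⁻ t, g t z ∂ν ∂m
      = ∫⁻ z, ∫⁻ r, f r.1 z * g r.2 z ∂μ.prod ν ∂m :=
        lintegral_congr fun z => (lintegral_prod_mul (by fun_prop) (by fun_prop)).symm
    _ = ∫⁻ r, ∫⁻ z, f r.1 z * g r.2 z ∂m ∂μ.prod ν :=
        lintegral_lintegral_swap integrand_measurable.aemeasurable
    _ = ∫⁻ s, ∫⁻ t, ∫⁻ z, f s z * g t z ∂m ∂ν ∂μ :=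
        lintegral_prod _ integrand_measurable.lintegral_prod_left'.aemeasurable

section PotentialDensity

variable {E : Type*}

/-- The `α`-potential density `u^α(x, y) = ∫₀^∞ e^{-αt} p(t, x, y) dt` of a transition density `p`.
It is `ℝ≥0∞`-valued, so that it makes sense for every real `α`. -/
noncomputable def potentialDensity (p : ℝ → E → E → ℝ≥0∞) (α : ℝ) (x y : E) : ℝ≥0∞ :=
  ∫⁻ t in Ioi (0 : ℝ), ENNReal.ofReal (Real.exp (-α * t)) * p t x y

theorem potentialDensity_comm {p : ℝ → E → E → ℝ≥0∞} {x y : E}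
    (hsymm : ∀ t : ℝ, 0 < t → p t x y = p t y x) (α : ℝ) :
    potentialDensity p α x y = potentialDensity p α y x :=
  setLIntegral_congr_fun measurableSet_Ioi fun t ht => by simp only [hsymm t ht]

variable [MeasurableSpace E]

theorem lintegral_exp_mul_mul_exp_mul (m : Measure E) (f g : E → ℝ≥0∞) (α s t : ℝ) :
    ∫⁻ z, ENNReal.ofReal (Real.exp (-α * s)) * f z *
        (ENNReal.ofReal (Real.exp (-α * t)) * g z) ∂m
      = ENNReal.ofReal (Real.exp (-α * (s + t))) * ∫⁻ z, f z * g z ∂m := by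
  rw [mul_add, Real.exp_add, ENNReal.ofReal_mul (Real.exp_nonneg _),
    ← lintegral_const_mul' _ _ (ENNReal.mul_ne_top ENNReal.ofReal_ne_top ENNReal.ofReal_ne_top)]
  simp only [mul_mul_mul_comm]

theorem stmt_3_general (m : Measure E) [SFinite m] (p : ℝ → E → E → ℝ≥0∞)
    (hmeas : Measurable fun q : ℝ × E × E => p q.1 q.2.1 q.2.2) (x y : E)
    (hCK : ∀ s t : ℝ, 0 < s → 0 < t → ∫⁻ z, p s x z * p t z y ∂m = p (s + t) x y) (α : ℝ) :
    ∫⁻ z, potentialDensity p α x z * potentialDensity p α z y ∂m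
      = ∫⁻ t in Ioi (0 : ℝ), ENNReal.ofReal (t * Real.exp (-α * t)) * p t x y := by
  let e : ℝ → ℝ≥0∞ := fun t => ENNReal.ofReal (Real.exp (-α * t))
  have e_measurable : Measurable e := by fun_prop
  have from_x_measurable : Measurable fun q : ℝ × E => p q.1 x q.2 :=
    hmeas.comp (by fun_prop : Measurable fun q : ℝ × E => (q.1, x, q.2))
  have to_y_measurable : Measurable fun q : ℝ × E => p q.1 q.2 y :=
    hmeas.comp (by fun_prop : Measurable fun q : ℝ × E => (q.1, q.2, y))
  have x_to_y_measurable : Measurable fun t : ℝ => p t x y :=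
    to_y_measurable.comp measurable_prodMk_right
  calc ∫⁻ z, potentialDensity p α x z * potentialDensity p α z y ∂m
      = ∫⁻ s in Ioi (0 : ℝ), ∫⁻ t in Ioi (0 : ℝ), ∫⁻ z, e s * p s x z * (e t * p t z y) ∂m :=
        lintegral_lintegral_mul_lintegral (by fun_prop) (by fun_prop)
    _ = ∫⁻ s in Ioi (0 : ℝ), ∫⁻ t in Ioi (0 : ℝ), e (s + t) * p (s + t) x y :=
        setLIntegral_congr_fun measurableSet_Ioi fun s hs =>
          setLIntegral_congr_fun measurableSet_Ioi fun t ht => by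
            rw [← hCK s t hs ht]
            exact lintegral_exp_mul_mul_exp_mul m _ _ α s t
    _ = ∫⁻ t in Ioi (0 : ℝ), ENNReal.ofReal t * (e t * p t x y) :=
        lintegral_Ioi_lintegral_Ioi_comp_add (g := fun t => e t * p t x y) (by fun_prop)
    _ = ∫⁻ t in Ioi (0 : ℝ), ENNReal.ofReal (t * Real.exp (-α * t)) * p t x y :=
        setLIntegral_congr_fun measurableSet_Ioi fun t ht => by
          simp only [e, ENNReal.ofReal_mul (le_of_lt ht), mul_assoc]

end PotentialDensity

/-- Let `p` be a measurable, symmetric kernel on a σ-finite measure space satisfying the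
Chapman–Kolmogorov identity, and let `u^α(x,y) = ∫₀^∞ e^{−αt} p(t,x,y) dt`. Then
`∫ (u^α(x,y))² m(dx) = ∫₀^∞ t e^{−αt} p(t,y,y) dt`. -/
theorem stmt_3 {E : Type*} [MeasurableSpace E] (m : Measure E) [SigmaFinite m]
    (p : ℝ → E → E → ℝ≥0∞)
    (hmeas : Measurable fun q : ℝ × E × E => p q.1 q.2.1 q.2.2)
    (hsymm : ∀ t : ℝ, 0 < t → ∀ x y : E, p t x y = p t y x)
    (hCK : ∀ s t : ℝ, 0 < s → 0 < t → ∀ y : E,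
      ∫⁻ x, p t y x * p s x y ∂m = p (t + s) y y)
    (α : ℝ) (hα : 0 < α) (y : E) :
    ∫⁻ x, (∫⁻ t in Set.Ioi (0 : ℝ), ENNReal.ofReal (Real.exp (-α * t)) * p t x y) ^ 2 ∂m
      = ∫⁻ t in Set.Ioi (0 : ℝ), ENNReal.ofReal (t * Real.exp (-α * t)) * p t y y := by
  rw [← stmt_3_general m p hmeas y y (fun s t hs ht => hCK t s ht hs y) α]
  exact lintegral_congr fun x => by
    rw [potentialDensity_comm (fun t ht => hsymm t ht y x), ← sq, potentialDensity]
end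

section
/- Let (E, 𝓔, m) be a σ-finite measure space and let p : (0,∞) × E × E → [0,∞] be measurable, symmetric in the sense that p(t,x,y) = p(t,y,x) for all t > 0 and x, y ∈ E, and satisfy the Chapman–Kolmogorov identity ∫_E p(t,y,x)·p(s,x,y) m(dx) = p(t+s,y,y) for all s, t > 0 and y ∈ E. Fix y ∈ E, 0 < ε < α, and define u^β(x,y) := ∫₀^∞ e^{−βt} p(t,x,y) dt for β > 0. Then ∫_E (u^α(x,y))² m(dx) ≤ (1/ε)·u^{α−ε}(y,y); in particular, if u^{α−ε}(y,y) < ∞ then x ↦ u^α(x,y) is square-integrable with respect to m. -/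
open MeasureTheory Set
open scoped ENNReal

/-!
Write `u^α(x, y)²` as a double integral over times `s, t > 0`. Tonelli and Chapman–Kolmogorov
turn `∫ u^α(x, y)² m(dx)` into the double integral of `e^{-α(s+t)} p(s+t, y, y)`. For
fixed `r = s + t` the variable `s` ranges over `(0, r)`, so this is `∫₀^∞ r e^{-αr} p(r, y, y) dr`,
and `r ≤ ε⁻¹ e^{εr}` bounds it by `ε⁻¹ u^{α-ε}(y, y)`.
-/

/-- The Laplace transform at `β` of an extended nonnegative function on `(0, ∞)`, so that
`u^β(x, y)` is the transform of `t ↦ p(t, x, y)`. As a Lebesgue integral in `ℝ≥0∞` it is defined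
for every real `β`, with value `∞` in case of divergence; values of `f` on `(-∞, 0]` are ignored. -/
noncomputable def laplaceTransform (β : ℝ) (f : ℝ → ℝ≥0∞) : ℝ≥0∞ :=
  ∫⁻ t in Ioi (0 : ℝ), ENNReal.ofReal (Real.exp (-β * t)) * f t

theorem lintegral_mul_lintegral_swap {S T E : Type*} [MeasurableSpace S] [MeasurableSpace T]
    [MeasurableSpace E] {μ : Measure S} {ν : Measure T} {m : Measure E} [SFinite μ] [SFinite ν]
    [SFinite m] {f : S → E → ℝ≥0∞} {g : T → E → ℝ≥0∞}
    (hf : Measurable (Function.uncurry f)) (hg : Measurable (Function.uncurry g)) :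
    ∫⁻ x, (∫⁻ s, f s x ∂μ) * (∫⁻ t, g t x ∂ν) ∂m = ∫⁻ s, ∫⁻ t, ∫⁻ x, f s x * g t x ∂m ∂ν ∂μ := by
  have hG : Measurable fun x => ∫⁻ t, g t x ∂ν := hg.lintegral_prod_left'
  calc ∫⁻ x, (∫⁻ s, f s x ∂μ) * (∫⁻ t, g t x ∂ν) ∂m
      = ∫⁻ x, ∫⁻ s, f s x * ∫⁻ t, g t x ∂ν ∂μ ∂m :=
        lintegral_congr fun x => (lintegral_mul_const _ hf.of_uncurry_right).symm
    _ = ∫⁻ s, ∫⁻ x, f s x * ∫⁻ t, g t x ∂ν ∂m ∂μ :=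
        lintegral_lintegral_swap
          ((hf.comp measurable_swap).mul (hG.comp measurable_fst)).aemeasurable
    _ = ∫⁻ s, ∫⁻ x, ∫⁻ t, f s x * g t x ∂ν ∂m ∂μ := by
        simp_rw [lintegral_const_mul _ hg.of_uncurry_right]
    _ = ∫⁻ s, ∫⁻ t, ∫⁻ x, f s x * g t x ∂m ∂ν ∂μ :=
        lintegral_congr fun s => lintegral_lintegral_swap
          ((hf.of_uncurry_left.comp measurable_fst).mul (hg.comp measurable_swap)).aemeasurable

theorem setLIntegral_Ioi_zero_comp_add_left (φ : ℝ → ℝ≥0∞) (s : ℝ) :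
    ∫⁻ t in Ioi (0 : ℝ), φ (s + t) = ∫⁻ r in Ioi s, φ r := by
  have h := (measurePreserving_add_left volume s).setLIntegral_comp_preimage_emb
    (measurableEmbedding_addLeft s) φ (Ioi s)
  simpa using h

theorem setLIntegral_Ioi_setLIntegral_Ioi_add {φ : ℝ → ℝ≥0∞}
    (hφ : AEMeasurable φ (volume.restrict (Ioi 0))) :
    ∫⁻ s in Ioi (0 : ℝ), ∫⁻ t in Ioi (0 : ℝ), φ (s + t) =
      ∫⁻ r in Ioi (0 : ℝ), ENNReal.ofReal r * φ r := by
  have hmeas : AEMeasurable (Function.uncurry fun s r : ℝ => (Ioi s).indicator φ r)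
      ((volume.restrict (Ioi 0)).prod (volume.restrict (Ioi 0))) :=
    hφ.comp_snd.indicator (measurableSet_lt measurable_fst measurable_snd)
  calc ∫⁻ s in Ioi (0 : ℝ), ∫⁻ t in Ioi (0 : ℝ), φ (s + t)
      = ∫⁻ s in Ioi (0 : ℝ), ∫⁻ r in Ioi (0 : ℝ), (Ioi s).indicator φ r := by
        refine setLIntegral_congr_fun measurableSet_Ioi fun s (hs : 0 < s) => ?_
        rw [setLIntegral_Ioi_zero_comp_add_left, setLIntegral_indicator measurableSet_Ioi,
          inter_eq_left.mpr (Ioi_subset_Ioi hs.le)]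
    _ = ∫⁻ r in Ioi (0 : ℝ), ∫⁻ s in Ioi (0 : ℝ), (Iio r).indicator (fun _ => φ r) s :=
        lintegral_lintegral_swap hmeas
    _ = ∫⁻ r in Ioi (0 : ℝ), ENNReal.ofReal r * φ r := by
        refine lintegral_congr fun r => ?_
        rw [setLIntegral_indicator measurableSet_Iio, setLIntegral_const, Iio_inter_Ioi,
          Real.volume_Ioo, sub_zero, mul_comm]

section Semigroup

variable {E : Type*} [MeasurableSpace E] {m : Measure E} [SFinite m]
  {f g : ℝ → E → ℝ≥0∞} {φ : ℝ → ℝ≥0∞}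

theorem aemeasurable_of_lintegral_mul_eq_add (hf : Measurable (Function.uncurry f))
    (hg : Measurable (Function.uncurry g))
    (hfg : ∀ s t : ℝ, 0 < s → 0 < t → ∫⁻ x, f s x * g t x ∂m = φ (s + t)) :
    AEMeasurable φ (volume.restrict (Ioi 0)) := by
  have hhalf : Measurable fun q : ℝ × E => (q.1 / 2, q.2) := by fun_prop
  have hpair : Measurable fun r : ℝ => ∫⁻ x, f (r / 2) x * g (r / 2) x ∂m :=
    ((hf.comp hhalf).mul (hg.comp hhalf)).lintegral_prod_right'
  refine hpair.aemeasurable.congr ?_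
  filter_upwards [ae_restrict_mem measurableSet_Ioi] with r hr
  rw [hfg _ _ (half_pos hr) (half_pos hr), add_halves]

theorem lintegral_setLIntegral_Ioi_mul_setLIntegral_Ioi (hf : Measurable (Function.uncurry f))
    (hg : Measurable (Function.uncurry g))
    (hfg : ∀ s t : ℝ, 0 < s → 0 < t → ∫⁻ x, f s x * g t x ∂m = φ (s + t)) :
    ∫⁻ x, (∫⁻ s in Ioi (0 : ℝ), f s x) * (∫⁻ t in Ioi (0 : ℝ), g t x) ∂m =
      ∫⁻ r in Ioi (0 : ℝ), ENNReal.ofReal r * φ r := by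
  rw [lintegral_mul_lintegral_swap hf hg,
    ← setLIntegral_Ioi_setLIntegral_Ioi_add (aemeasurable_of_lintegral_mul_eq_add hf hg hfg)]
  exact setLIntegral_congr_fun measurableSet_Ioi fun s hs =>
    setLIntegral_congr_fun measurableSet_Ioi fun t ht => hfg s t hs ht

theorem lintegral_laplaceTransform_mul_laplaceTransform (hf : Measurable (Function.uncurry f))
    (hg : Measurable (Function.uncurry g))
    (hfg : ∀ s t : ℝ, 0 < s → 0 < t → ∫⁻ x, f s x * g t x ∂m = φ (s + t)) (α : ℝ) :
    ∫⁻ x, laplaceTransform α (f · x) * laplaceTransform α (g · x) ∂m =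
      laplaceTransform α fun r => ENNReal.ofReal r * φ r := by
  let e : ℝ → ℝ≥0∞ := fun t => ENNReal.ofReal (Real.exp (-α * t))
  have he : Measurable fun q : ℝ × E => e q.1 := by fun_prop
  have he_add (s t : ℝ) : e (s + t) = e s * e t := by
    simp only [e, mul_add, Real.exp_add, ENNReal.ofReal_mul (Real.exp_nonneg _)]
  have hefg (s t : ℝ) (hs : 0 < s) (ht : 0 < t) :
      ∫⁻ x, (e s * f s x) * (e t * g t x) ∂m = e (s + t) * φ (s + t) := by
    rw [← hfg s t hs ht, ← lintegral_const_mul' (e (s + t)) _ ENNReal.ofReal_ne_top]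
    exact lintegral_congr fun x => by rw [he_add, mul_mul_mul_comm]
  calc ∫⁻ x, laplaceTransform α (f · x) * laplaceTransform α (g · x) ∂m
      = ∫⁻ r in Ioi (0 : ℝ), ENNReal.ofReal r * (e r * φ r) :=
        lintegral_setLIntegral_Ioi_mul_setLIntegral_Ioi (φ := fun r => e r * φ r)
          (he.mul hf) (he.mul hg) hefg
    _ = laplaceTransform α fun r => ENNReal.ofReal r * φ r :=
        lintegral_congr fun r => mul_left_comm _ _ _

end Semigroup

theorem exp_neg_mul_mul_le_one_div_mul_exp {ε : ℝ} (hε : 0 < ε) (α t : ℝ) :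
    Real.exp (-α * t) * t ≤ 1 / ε * Real.exp (-(α - ε) * t) := by
  have ht : t ≤ 1 / ε * Real.exp (ε * t) := by
    rw [one_div_mul_eq_div, le_div_iff₀' hε]
    linarith [Real.add_one_le_exp (ε * t)]
  calc Real.exp (-α * t) * t ≤ Real.exp (-α * t) * (1 / ε * Real.exp (ε * t)) := by gcongr
    _ = 1 / ε * Real.exp (-(α - ε) * t) := by
        rw [mul_left_comm, ← Real.exp_add]
        ring_nf

theorem laplaceTransform_ofReal_mul_le {ε : ℝ} (hε : 0 < ε) (α : ℝ) (φ : ℝ → ℝ≥0∞) :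
    laplaceTransform α (fun t => ENNReal.ofReal t * φ t) ≤
      ENNReal.ofReal (1 / ε) * laplaceTransform (α - ε) φ := by
  unfold laplaceTransform
  rw [← lintegral_const_mul' _ _ ENNReal.ofReal_ne_top]
  refine lintegral_mono fun t => ?_
  simp only [← mul_assoc, ← ENNReal.ofReal_mul (Real.exp_nonneg _),
    ← ENNReal.ofReal_mul (one_div_nonneg.mpr hε.le)]
  gcongr ENNReal.ofReal ?_ * _
  exact exp_neg_mul_mul_le_one_div_mul_exp hε α t

-- For `stmt_4`, `f t x = p t x y` and `φ t = p t y y`.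
theorem stmt_4_general {E : Type*} [MeasurableSpace E] {m : Measure E} [SFinite m]
    {f : ℝ → E → ℝ≥0∞} {φ : ℝ → ℝ≥0∞} (hf : Measurable (Function.uncurry f))
    (hfφ : ∀ s t : ℝ, 0 < s → 0 < t → ∫⁻ x, f s x * f t x ∂m = φ (s + t))
    (α : ℝ) {ε : ℝ} (hε : 0 < ε) :
    ∫⁻ x, laplaceTransform α (f · x) ^ 2 ∂m ≤
        ENNReal.ofReal (1 / ε) * laplaceTransform (α - ε) φ ∧
      (laplaceTransform (α - ε) φ < ⊤ → ∫⁻ x, laplaceTransform α (f · x) ^ 2 ∂m < ⊤) := by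
  have hle : ∫⁻ x, laplaceTransform α (f · x) ^ 2 ∂m ≤
      ENNReal.ofReal (1 / ε) * laplaceTransform (α - ε) φ := by
    simp_rw [sq, lintegral_laplaceTransform_mul_laplaceTransform hf hf hfφ α]
    exact laplaceTransform_ofReal_mul_le hε α φ
  exact ⟨hle, fun hfin => hle.trans_lt (ENNReal.mul_lt_top ENNReal.ofReal_lt_top hfin)⟩

/-- For a measurable, symmetric Chapman–Kolmogorov kernel `p` on a σ-finite measure space,
with `u^β(x,y) = ∫₀^∞ e^{−βt} p(t,x,y) dt` and `0 < ε < α`: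
`∫ (u^α(x,y))² m(dx) ≤ (1/ε)·u^{α−ε}(y,y)`; in particular, if `u^{α−ε}(y,y) < ∞`,
then `x ↦ u^α(x,y)` is square-integrable with respect to `m`. -/
theorem stmt_4 {E : Type*} [MeasurableSpace E] (m : Measure E) [SigmaFinite m]
    (p : ℝ → E → E → ℝ≥0∞)
    (hmeas : Measurable fun q : ℝ × E × E => p q.1 q.2.1 q.2.2)
    (hsymm : ∀ t : ℝ, 0 < t → ∀ x y : E, p t x y = p t y x)
    (hCK : ∀ s t : ℝ, 0 < s → 0 < t → ∀ y : E,
      ∫⁻ x, p t y x * p s x y ∂m = p (t + s) y y)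
    (α ε : ℝ) (hε : 0 < ε) (hεα : ε < α) (y : E) :
    (∫⁻ x, (∫⁻ t in Set.Ioi (0 : ℝ), ENNReal.ofReal (Real.exp (-α * t)) * p t x y) ^ 2 ∂m
      ≤ ENNReal.ofReal (1 / ε) *
          ∫⁻ t in Set.Ioi (0 : ℝ), ENNReal.ofReal (Real.exp (-(α - ε) * t)) * p t y y) ∧
    ((∫⁻ t in Set.Ioi (0 : ℝ), ENNReal.ofReal (Real.exp (-(α - ε) * t)) * p t y y) < ⊤ →
      ∫⁻ x, (∫⁻ t in Set.Ioi (0 : ℝ), ENNReal.ofReal (Real.exp (-α * t)) * p t x y) ^ 2 ∂m < ⊤) := by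
  have hpy : Measurable fun q : ℝ × E => p q.1 q.2 y :=
    hmeas.comp (measurable_fst.prodMk (measurable_snd.prodMk measurable_const))
  refine stmt_4_general (φ := fun t => p t y y) hpy (fun s t hs ht => ?_) α hε
  simp_rw [← hCK t s ht hs y, hsymm s hs y]
end

section
/- Let −∞ ≤ l < r ≤ ∞, y* ∈ (l,r), let s : (l,r) → ℝ be continuously differentiable with s' > 0, s(y*) = 0 and lim_{x→r} s(x) = +∞, let σ : (l,r) → (0,∞) be continuous, and let c > 0. Define s̃(x) := (1 + c(s(x) + |s(x)|)) / (2(1 + c|s(x)|)) and m̃(z) := 4(1 + c|s(z)|)² / (c·σ(z)²·s'(z)). Then lim_{x→r} ∫_{y*}^x (s̃(x) − s̃(z))·m̃(z) dz = ∞ if and only if ∫_{y*}^r s(z)/(σ(z)²·s'(z)) dz = ∞. -/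
open MeasureTheory Set Filter
open scoped ENNReal

/-- The open interval `(l,r)` with `EReal` endpoints, viewed as a set of reals. -/
def Iab (l r : EReal) : Set ℝ := {x : ℝ | l < (x : EReal) ∧ (x : EReal) < r}

/-- The filter of real numbers in `(l,r)` approaching the (possibly infinite) point `a`. -/
noncomputable def nearFilter (a l r : EReal) : Filter ℝ :=
  Filter.comap (fun x : ℝ => (x : EReal)) (nhds a) ⊓ Filter.principal (Iab l r)

/-!
The transformed scale function is increasing with limit `1` at `r`, so by monotone convergence
Feller's integral tends to `∫_{y*}^r (1 - s̃(z)) m̃(z) dz`. Where `s ≥ 0`, the integrand equals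
`(2 / c) (1 + c s(z)) / (σ(z)² s'(z))`, which is comparable to `s(z) / (σ(z)² s'(z))` near `r`
because `s → ∞` there, and the part of the integral away from `r` is finite.
-/

open scoped Topology

section Endpoint

variable {l r : EReal} {a : ℝ}

theorem setOf_lt_and_coe_lt_eq_Iab (a : ℝ) (r : EReal) :
    {z : ℝ | a < z ∧ (z : EReal) < r} = Iab a r := by
  simp only [Iab, EReal.coe_lt_coe_iff]

theorem isOpen_Iab (l r : EReal) : IsOpen (Iab l r) :=
  isOpen_Ioo.preimage continuous_coe_real_ereal

theorem Icc_subset_Iab {b : ℝ} (ha : a ∈ Iab l r) (hb : b ∈ Iab l r) : Icc a b ⊆ Iab l r :=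
  fun _ hz => ⟨ha.1.trans_le (EReal.coe_le_coe hz.1), (EReal.coe_le_coe hz.2).trans_lt hb.2⟩

theorem Iab_subset_Iab {l' : EReal} (h : l ≤ l') : Iab l' r ⊆ Iab l r :=
  fun _ hz => ⟨h.trans_lt hz.1, hz.2⟩

theorem nearFilter_anti_left {l' : EReal} (h : l ≤ l') : nearFilter r l' r ≤ nearFilter r l r :=
  inf_le_inf_left _ (principal_mono.2 (Iab_subset_Iab h))

theorem nearFilter_hasBasis (h : l < r) :
    (nearFilter r l r).HasBasis (fun b : ℝ => b ∈ Iab l r) (fun b => Iab b r) := by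
  refine ⟨fun t => ⟨fun ht => ?_, fun ⟨b, hb, hbt⟩ => ?_⟩⟩
  · obtain ⟨V, hV, hVt⟩ := mem_comap.1 (mem_inf_principal.1 ht)
    obtain ⟨d, hdr, hdV⟩ := exists_Ioc_subset_of_mem_nhds hV ⟨l, h⟩
    obtain ⟨b, hb, hbr⟩ := EReal.lt_iff_exists_real_btwn.1 (max_lt hdr h)
    obtain ⟨hdb, hlb⟩ := max_lt_iff.1 hb
    exact ⟨b, ⟨hlb, hbr⟩, fun z hz =>
      hVt (hdV ⟨hdb.trans hz.1, hz.2.le⟩) ⟨hlb.trans hz.1, hz.2⟩⟩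
  · exact mem_of_superset
      (inter_mem_inf (preimage_mem_comap (Ioi_mem_nhds hb.2)) (mem_principal_self _))
      fun z hz => hbt ⟨hz.1, hz.2.2⟩

instance nearFilter_isCountablyGenerated : (nearFilter r l r).IsCountablyGenerated := by
  unfold nearFilter
  infer_instance

theorem nearFilter_neBot (h : l < r) : (nearFilter r l r).NeBot :=
  (nearFilter_hasBasis h).neBot_iff.2 fun hb => EReal.lt_iff_exists_real_btwn.1 hb.2

theorem eventually_mem_Iab (ha : a ∈ Iab l r) : ∀ᶠ x in nearFilter r l r, x ∈ Iab a r :=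
  (nearFilter_hasBasis (ha.1.trans ha.2)).mem_of_mem ha

theorem lintegral_ofReal_Iab_eq_top_of_eventually_le {f g : ℝ → ℝ} {C : ℝ}
    (hf : LocallyIntegrableOn f (Iab l r)) (ha : a ∈ Iab l r) (hC : 0 ≤ C)
    (hfg : ∀ᶠ z in nearFilter r l r, f z ≤ C * g z)
    (hftop : ∫⁻ z in Iab a r, ENNReal.ofReal (f z) = ⊤) :
    ∫⁻ z in Iab a r, ENNReal.ofReal (g z) = ⊤ := by
  obtain ⟨b, hb, hle⟩ := (nearFilter_hasBasis ha.2).eventually_iff.1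
    (hfg.filter_mono (nearFilter_anti_left ha.1.le))
  have hbI : b ∈ Iab l r := Iab_subset_Iab ha.1.le hb
  have hcover : Iab a r ⊆ Icc a b ∪ Iab b r := fun z hz =>
    (le_or_gt z b).imp (fun h => ⟨(EReal.coe_lt_coe_iff.1 hz.1).le, h⟩)
      fun h => ⟨EReal.coe_lt_coe h, hz.2⟩
  have hcompact : ∫⁻ z in Icc a b, ENNReal.ofReal (f z) ≠ ⊤ :=
    (hf.integrableOn_compact_subset (Icc_subset_Iab ha hbI) isCompact_Icc).lintegral_lt_top.ne
  have htail : ∫⁻ z in Iab b r, ENNReal.ofReal (f z)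
      ≤ ENNReal.ofReal C * ∫⁻ z in Iab a r, ENNReal.ofReal (g z) := calc
    _ ≤ ∫⁻ z in Iab b r, ENNReal.ofReal C * ENNReal.ofReal (g z) :=
      setLIntegral_mono' (isOpen_Iab _ _).measurableSet fun z hz =>
        (ENNReal.ofReal_le_ofReal (hle hz)).trans_eq (ENNReal.ofReal_mul hC)
    _ = ENNReal.ofReal C * ∫⁻ z in Iab b r, ENNReal.ofReal (g z) :=
      lintegral_const_mul' _ _ ENNReal.ofReal_ne_top
    _ ≤ _ := by gcongr; exact Iab_subset_Iab hb.1.le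
  by_contra hg
  refine ne_top_of_le_ne_top ?_ (((lintegral_mono_set hcover).trans
    (lintegral_union_le _ _ _)).trans (add_le_add_right htail _)) hftop
  exact ENNReal.add_ne_top.2 ⟨hcompact, ENNReal.mul_ne_top ENNReal.ofReal_ne_top hg⟩

end Endpoint

theorem tendsto_lintegral_of_le_of_tendsto {α ι : Type*} [MeasurableSpace α] {μ : Measure α}
    {u : Filter ι} [u.IsCountablyGenerated] {F : ι → α → ℝ≥0∞} {f : α → ℝ≥0∞}
    (hF : ∀ i, AEMeasurable (F i) μ) (hle : ∀ᶠ i in u, ∀ᵐ x ∂μ, F i x ≤ f x)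
    (hlim : ∀ᵐ x ∂μ, Tendsto (fun i => F i x) u (𝓝 (f x))) :
    Tendsto (fun i => ∫⁻ x, F i x ∂μ) u (𝓝 (∫⁻ x, f x ∂μ)) := by
  obtain rfl | _ := u.eq_or_neBot
  · exact tendsto_bot
  refine tendsto_of_le_liminf_of_limsup_le ?_
    (limsup_le_of_le (h := hle.mono fun i hi => lintegral_mono_ae hi))
  calc ∫⁻ x, f x ∂μ = ∫⁻ x, liminf (fun i => F i x) u ∂μ :=
        lintegral_congr_ae (hlim.mono fun x hx => hx.liminf_eq.symm)
    _ ≤ liminf (fun i => ∫⁻ x, F i x ∂μ) u := lintegral_liminf_le' hF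

section Feller

variable {l r : EReal} {a : ℝ} {p m : ℝ → ℝ}

/-- Feller's integral `∫_a^x (p(x) - p(z)) m(z) dz` of a diffusion with scale function `p` and
speed density `m`. The diffusion does not explode at `r` exactly when it tends to `∞` as
`x → r`. -/
noncomputable def fellerIntegral (p m : ℝ → ℝ) (a x : ℝ) : ℝ :=
  ∫ z in a..x, (p x - p z) * m z

theorem integrableOn_sub_mul_of_monotoneOn {b : ℝ} (hp : MonotoneOn p (Icc a b))
    (hm : IntegrableOn m (Icc a b)) :
    IntegrableOn (fun z => (p b - p z) * m z) (Icc a b) := by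
  refine Integrable.bdd_mul (c := p b - p a) hm
    ((aemeasurable_restrict_of_monotoneOn measurableSet_Icc hp).const_sub _).aestronglyMeasurable ?_
  filter_upwards [ae_restrict_mem measurableSet_Icc] with z hz
  have hab : a ≤ b := hz.1.trans hz.2
  have hzb := hp hz (right_mem_Icc.2 hab) hz.2
  have haz := hp (left_mem_Icc.2 hab) hz hz.1
  rw [Real.norm_of_nonneg (sub_nonneg.2 hzb)]
  linarith

theorem ofReal_fellerIntegral (hp : MonotoneOn p (Iab l r))
    (hm : LocallyIntegrableOn m (Iab l r)) (hm0 : ∀ z ∈ Iab l r, 0 ≤ m z)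
    (ha : a ∈ Iab l r) {x : ℝ} (hx : x ∈ Iab a r) :
    ENNReal.ofReal (fellerIntegral p m a x)
      = ∫⁻ z in Iab a r, ENNReal.ofReal ((p x - p z) * m z) := by
  have hxI : x ∈ Iab l r := Iab_subset_Iab ha.1.le hx
  have hsub : Icc a x ⊆ Iab l r := Icc_subset_Iab ha hxI
  have hIoc : Ioc a x ⊆ Iab a r := fun z hz =>
    ⟨EReal.coe_lt_coe hz.1, (hsub ⟨hz.1.le, hz.2⟩).2⟩
  have hint : IntegrableOn (fun z => (p x - p z) * m z) (Ioc a x) :=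
    (integrableOn_sub_mul_of_monotoneOn (hp.mono hsub)
      (hm.integrableOn_compact_subset hsub isCompact_Icc)).mono_set Ioc_subset_Icc_self
  have hnonneg : ∀ z ∈ Ioc a x, 0 ≤ (p x - p z) * m z := fun z hz =>
    have hzI := hsub ⟨hz.1.le, hz.2⟩
    mul_nonneg (sub_nonneg.2 (hp hzI hxI hz.2)) (hm0 z hzI)
  have hvanish : ∀ z ∈ Iab a r \ Ioc a x, ENNReal.ofReal ((p x - p z) * m z) = 0 := by
    rintro z ⟨hz, hzx⟩
    have hzI : z ∈ Iab l r := Iab_subset_Iab ha.1.le hz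
    have hxz : x ≤ z := le_of_not_ge fun h => hzx ⟨EReal.coe_lt_coe_iff.1 hz.1, h⟩
    exact ENNReal.ofReal_of_nonpos
      (mul_nonpos_of_nonpos_of_nonneg (sub_nonpos.2 (hp hxI hzI hxz)) (hm0 z hzI))
  rw [fellerIntegral, intervalIntegral.integral_of_le (EReal.coe_lt_coe_iff.1 hx.1).le,
    ofReal_integral_eq_lintegral_ofReal hint (ae_restrict_of_forall_mem measurableSet_Ioc hnonneg),
    ← lintegral_inter_add_sdiff _ (Iab a r) measurableSet_Ioc, inter_eq_right.2 hIoc,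
    setLIntegral_eq_zero ((isOpen_Iab _ _).measurableSet.diff measurableSet_Ioc) hvanish, add_zero]

theorem tendsto_ofReal_fellerIntegral {P : ℝ} (hp : MonotoneOn p (Iab l r))
    (hP : Tendsto p (nearFilter r l r) (𝓝 P)) (hm : LocallyIntegrableOn m (Iab l r))
    (hm0 : ∀ z ∈ Iab l r, 0 ≤ m z) (ha : a ∈ Iab l r) :
    Tendsto (fun x => ENNReal.ofReal (fellerIntegral p m a x)) (nearFilter r l r)
      (𝓝 (∫⁻ z in Iab a r, ENNReal.ofReal ((P - p z) * m z))) := by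
  have := nearFilter_neBot (ha.1.trans ha.2)
  have hsub : Iab a r ⊆ Iab l r := Iab_subset_Iab ha.1.le
  have hmeas : MeasurableSet (Iab a r) := (isOpen_Iab _ _).measurableSet
  have hpP : ∀ x ∈ Iab l r, p x ≤ P := fun x hx =>
    ge_of_tendsto hP ((eventually_mem_Iab hx).mono fun y hy =>
      hp hx (Iab_subset_Iab hx.1.le hy) (EReal.coe_lt_coe_iff.1 hy.1).le)
  refine (tendsto_lintegral_of_le_of_tendsto (fun x => ?_) ?_ ?_).congr'
    ((eventually_mem_Iab ha).mono fun x hx => (ofReal_fellerIntegral hp hm hm0 ha hx).symm)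
  · exact (((aemeasurable_restrict_of_monotoneOn hmeas (hp.mono hsub)).const_sub _).mul
      (hm.mono_set hsub).aestronglyMeasurable.aemeasurable).ennreal_ofReal
  · filter_upwards [eventually_mem_Iab ha] with x hx
    exact ae_restrict_of_forall_mem hmeas fun z hz => ENNReal.ofReal_le_ofReal
      (mul_le_mul_of_nonneg_right (sub_le_sub_right (hpP x (hsub hx)) _) (hm0 z (hsub hz)))
  · exact ae_of_all _ fun z => ENNReal.tendsto_ofReal ((hP.sub_const _).mul_const _)

theorem tendsto_fellerIntegral_atTop_iff {P : ℝ} (hp : MonotoneOn p (Iab l r))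
    (hP : Tendsto p (nearFilter r l r) (𝓝 P)) (hm : LocallyIntegrableOn m (Iab l r))
    (hm0 : ∀ z ∈ Iab l r, 0 ≤ m z) (ha : a ∈ Iab l r) :
    Tendsto (fellerIntegral p m a) (nearFilter r l r) atTop
      ↔ ∫⁻ z in Iab a r, ENNReal.ofReal ((P - p z) * m z) = ⊤ := by
  have := nearFilter_neBot (ha.1.trans ha.2)
  have hlim := tendsto_ofReal_fellerIntegral hp hP hm hm0 ha
  rw [← ENNReal.tendsto_ofReal_nhds_top]
  exact ⟨tendsto_nhds_unique hlim, fun h => h ▸ hlim⟩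

end Feller

section TransformedDiffusion

variable {c : ℝ}

/-- The scale function `s̃` of the transformed diffusion as a function of `u = s(x)`. -/
noncomputable def transformedScale (c u : ℝ) : ℝ :=
  (1 + c * (u + |u|)) / (2 * (1 + c * |u|))

/-- The speed density `m̃` of the transformed diffusion. -/
noncomputable def transformedSpeed (c : ℝ) (s s' σ : ℝ → ℝ) (z : ℝ) : ℝ :=
  4 * (1 + c * |s z|) ^ 2 / (c * σ z ^ 2 * s' z)

theorem one_sub_transformedScale (hc : 0 ≤ c) (u : ℝ) :
    1 - transformedScale c u = (1 + c * (|u| - u)) / (2 * (1 + c * |u|)) := by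
  have : 1 + c * |u| ≠ 0 := by positivity
  unfold transformedScale
  field_simp
  ring

theorem transformedScale_monotone (hc : 0 ≤ c) : Monotone (transformedScale c) := by
  intro u v huv
  have habs : u * |v| ≤ v * |u| := by
    rcases abs_cases u with ⟨hu, _⟩ | ⟨hu, _⟩ <;> rcases abs_cases v with ⟨hv, _⟩ | ⟨hv, _⟩ <;>
      rw [hu, hv] <;> nlinarith
  unfold transformedScale
  rw [div_le_div_iff₀ (by positivity) (by positivity)]
  nlinarith [mul_le_mul_of_nonneg_left huv hc,
    mul_le_mul_of_nonneg_left habs (mul_nonneg hc hc)]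

theorem tendsto_transformedScale_atTop (hc : 0 < c) :
    Tendsto (transformedScale c) atTop (𝓝 1) := by
  have hden : Tendsto (fun u : ℝ => 2 * (1 + c * u)) atTop atTop :=
    (tendsto_atTop_add_const_left _ 1 (tendsto_id.const_mul_atTop hc)).const_mul_atTop two_pos
  have hlim : Tendsto (fun u : ℝ => 1 - (2 * (1 + c * u))⁻¹) atTop (𝓝 (1 - 0)) :=
    tendsto_const_nhds.sub (tendsto_inv_atTop_zero.comp hden)
  rw [sub_zero] at hlim
  refine hlim.congr' ((eventually_ge_atTop 0).mono fun u hu => ?_)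
  have := one_sub_transformedScale hc.le u
  rw [abs_of_nonneg hu, sub_self, mul_zero, add_zero, one_div] at this
  linarith

variable {s s' σ : ℝ → ℝ}

theorem transformedSpeed_eq_mul (c : ℝ) (s s' σ : ℝ → ℝ) :
    transformedSpeed c s s' σ
      = fun z => 4 / c * (1 + c * |s z|) ^ 2 * (1 / (σ z ^ 2 * s' z)) := by
  funext z
  rw [transformedSpeed, mul_assoc c]
  ring

theorem one_sub_transformedScale_mul_transformedSpeed (hc : 0 ≤ c) (z : ℝ) :
    (1 - transformedScale c (s z)) * transformedSpeed c s s' σ z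
      = 2 / c * (1 + c * |s z|) * (1 + c * (|s z| - s z)) * (1 / (σ z ^ 2 * s' z)) := by
  have : 1 + c * |s z| ≠ 0 := by positivity
  rw [one_sub_transformedScale hc, transformedSpeed_eq_mul]
  field_simp
  ring

theorem lintegral_one_sub_transformedScale_mul_transformedSpeed_eq_top_iff {l r : EReal} {a : ℝ}
    (ha : a ∈ Iab l r) (hc : 0 < c) (hs : ContinuousOn s (Iab l r))
    (hr : Tendsto s (nearFilter r l r) atTop)
    (hρ : LocallyIntegrableOn (fun z => 1 / (σ z ^ 2 * s' z)) (Iab l r))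
    (hs' : ∀ z ∈ Iab l r, 0 ≤ s' z) :
    ∫⁻ z in Iab a r, ENNReal.ofReal
        ((1 - transformedScale c (s z)) * transformedSpeed c s s' σ z) = ⊤
      ↔ ∫⁻ z in Iab a r, ENNReal.ofReal (s z / (σ z ^ 2 * s' z)) = ⊤ := by
  have hclosed := (isOpen_Iab l r).isLocallyClosed
  have hmem : ∀ᶠ z in nearFilter r l r, z ∈ Iab l r :=
    (eventually_mem_Iab ha).mono fun z hz => Iab_subset_Iab ha.1.le hz
  simp only [one_sub_transformedScale_mul_transformedSpeed hc.le, div_eq_mul_one_div (s _)]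
  constructor
  · refine lintegral_ofReal_Iab_eq_top_of_eventually_le (C := 2 / c * (1 + c))
      (hρ.continuousOn_mul (by fun_prop) hclosed) ha (by positivity) ?_
    filter_upwards [hr.eventually_ge_atTop 1, hmem] with z hz hzI
    have := hs' z hzI
    rw [abs_of_nonneg (by linarith), sub_self, mul_zero, add_zero, mul_one, ← mul_assoc,
      mul_assoc (2 / c) (1 + c)]
    have hlin : 1 + c * s z ≤ (1 + c) * s z := by linarith
    gcongr
  · refine lintegral_ofReal_Iab_eq_top_of_eventually_le (C := 1 / 2)
      (hρ.continuousOn_mul hs hclosed) ha (by positivity) ?_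
    filter_upwards [hr.eventually_ge_atTop 0, hmem] with z hz hzI
    have := hs' z hzI
    rw [abs_of_nonneg hz, sub_self, mul_zero, add_zero, mul_one, ← mul_assoc]
    gcongr
    field_simp
    linarith

end TransformedDiffusion

theorem monotoneOn_Iab_of_hasDerivAt_nonneg {l r : EReal} {s s' : ℝ → ℝ}
    (hderiv : ∀ x ∈ Iab l r, HasDerivAt s (s' x) x) (hs' : ∀ x ∈ Iab l r, 0 ≤ s' x) :
    MonotoneOn s (Iab l r) := by
  intro a ha b hb hab
  have hsub := Icc_subset_Iab ha hb
  exact monotoneOn_of_hasDerivWithinAt_nonneg (convex_Icc a b)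
    (fun x hx => (hderiv x (hsub hx)).continuousAt.continuousWithinAt)
    (fun x hx => (hderiv x (hsub (interior_subset hx))).hasDerivWithinAt)
    (fun x hx => hs' x (hsub (interior_subset hx)))
    (left_mem_Icc.2 hab) (right_mem_Icc.2 hab) hab

theorem stmt_12_general {l r : EReal} {a : ℝ} (ha : a ∈ Iab l r)
    {s s' σ : ℝ → ℝ} {c : ℝ} (hc : 0 < c)
    (hderiv : ∀ x ∈ Iab l r, HasDerivAt s (s' x) x)
    (hs'pos : ∀ x ∈ Iab l r, 0 < s' x)
    (hr : Tendsto s (nearFilter r l r) atTop)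
    (hσpos : ∀ x ∈ Iab l r, 0 < σ x)
    (hρ : LocallyIntegrableOn (fun z => 1 / (σ z ^ 2 * s' z)) (Iab l r)) :
    Tendsto (fellerIntegral (fun x => transformedScale c (s x)) (transformedSpeed c s s' σ) a)
        (nearFilter r l r) atTop
      ↔ ∫⁻ z in Iab a r, ENNReal.ofReal (s z / (σ z ^ 2 * s' z)) = ⊤ := by
  have hs : ContinuousOn s (Iab l r) := fun x hx => (hderiv x hx).continuousAt.continuousWithinAt
  have hmono : MonotoneOn (fun x => transformedScale c (s x)) (Iab l r) :=
    (transformedScale_monotone hc.le).comp_monotoneOn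
      (monotoneOn_Iab_of_hasDerivAt_nonneg hderiv fun x hx => (hs'pos x hx).le)
  have hspeed : LocallyIntegrableOn (transformedSpeed c s s' σ) (Iab l r) := by
    rw [transformedSpeed_eq_mul]
    exact hρ.continuousOn_mul (by fun_prop) (isOpen_Iab l r).isLocallyClosed
  have hspeed_nonneg : ∀ z ∈ Iab l r, 0 ≤ transformedSpeed c s s' σ z := fun z hz => by
    have hσz := hσpos z hz
    have hs'z := hs'pos z hz
    unfold transformedSpeed
    positivity
  rw [tendsto_fellerIntegral_atTop_iff hmono ((tendsto_transformedScale_atTop hc).comp hr)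
    hspeed hspeed_nonneg ha]
  exact lintegral_one_sub_transformedScale_mul_transformedSpeed_eq_top_iff ha hc hs hr hρ
    fun z hz => (hs'pos z hz).le

/-- Feller's test for the transformed diffusion: with
`s̃(x) = (1 + c(s(x)+|s(x)|))/(2(1 + c|s(x)|))` and
`m̃(z) = 4(1 + c|s(z)|)²/(c σ(z)² s'(z))`, the quantity
`∫_{y*}^x (s̃(x) − s̃(z)) m̃(z) dz` tends to `∞` as `x → r` if and only if
`∫_{y*}^r s(z)/(σ(z)² s'(z)) dz = ∞`. -/
theorem stmt_12 (l r : EReal) (ystar : ℝ) (hy : ystar ∈ Iab l r)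
    (s s' σ : ℝ → ℝ) (c : ℝ) (hc : 0 < c)
    (hderiv : ∀ x ∈ Iab l r, HasDerivAt s (s' x) x)
    (hs'cont : ContinuousOn s' (Iab l r))
    (hs'pos : ∀ x ∈ Iab l r, 0 < s' x)
    (hsy : s ystar = 0)
    (hr : Tendsto s (nearFilter r l r) Filter.atTop)
    (hσcont : ContinuousOn σ (Iab l r)) (hσpos : ∀ x ∈ Iab l r, 0 < σ x) :
    Tendsto (fun x => ∫ z in ystar..x,
        ((1 + c * (s x + |s x|)) / (2 * (1 + c * |s x|))
            - (1 + c * (s z + |s z|)) / (2 * (1 + c * |s z|)))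
          * (4 * (1 + c * |s z|) ^ 2 / (c * σ z ^ 2 * s' z)))
      (nearFilter r l r) Filter.atTop
    ↔ ∫⁻ z in {z : ℝ | ystar < z ∧ (z : EReal) < r},
        ENNReal.ofReal (s z / (σ z ^ 2 * s' z)) = ⊤ := by
  have hρ : ContinuousOn (fun z => 1 / (σ z ^ 2 * s' z)) (Iab l r) :=
    continuousOn_const.div ((hσcont.pow 2).mul hs'cont) fun z hz =>
      (mul_pos (pow_pos (hσpos z hz) 2) (hs'pos z hz)).ne'
  rw [setOf_lt_and_coe_lt_eq_Iab]
  exact stmt_12_general hy hc hderiv hs'pos hr hσpos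
    (hρ.locallyIntegrableOn (isOpen_Iab l r).measurableSet)
end
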